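/- arXiv:1701.08949 — 3 statements merged into one kernel-verified Lean document; each statement's English description precedes it below -/
import Mathlib

section
/- Let A be an algebra and let α₁,…,αₙ,β,γ,δ and δ_t (t ∈ I) be congruences of A. Then: (1) if C(α₁,…,αₙ;δ_t) holds for every t ∈ I, then C(α₁,…,αₙ;⋀_{t∈I} δ_t) holds; (2) if α_i ≤ β_i for each i, then C(β₁,…,βₙ;δ) implies C(α₁,…,αₙ;δ); (3) for any permutation σ of {1,…,n−1}, C(α₁,…,α_{n−1},αₙ;δ) holds if and only if C(α_{σ(1)},…,α_{σ(n−1)},αₙ;δ) holds; (4) for any congruence γ ≤ α₁∧⋯∧αₙ∧δ, C(α₁,…,αₙ;δ) holds in A if and only if C(α₁/γ,…,αₙ/γ;δ/γ) holds in A/γ; (5) for i < n, C(α₁,…,α_{i−1},α_{i+1},…,αₙ;δ) implies C(α₁,…,αₙ;δ); (6) if αₙ ∧ (β∘(δ∧αₙ)∘β) ⊆ δ, then for every k < n, C(α₁,…,α_{k−1},β,α_{k+1},…,αₙ;δ) holds, and if in addition αₙ ∧ (γ∘(δ∧αₙ)∘γ) ⊆ δ, then C(α₁,…,α_{k−1},β∨γ,α_{k+1},…,αₙ;δ)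 holds. -/
set_option autoImplicit false

namespace UA

/-- A signature: a type of operation symbols, each with a finite arity. -/
structure Signature : Type 1 where
  ops : Type
  arity : ops → ℕ

/-- An algebra for a signature: a carrier set together with an interpretation
of every operation symbol. -/
structure Algebra (σ : Signature) : Type 1 where
  carrier : Type
  interp : (o : σ.ops) → (Fin (σ.arity o) → carrier) → carrier

variable {σ : Signature}

/-- A congruence of an algebra: an equivalence relation compatible with all
basic operations. -/
structure Con (A : Algebra σ) : Type where
  r : A.carrier → A.carrier → Prop
  refl : ∀ a, r a a
  symm : ∀ {a b}, r a b → r b a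
  trans : ∀ {a b c}, r a b → r b c → r a c
  compat : ∀ (o : σ.ops) (x y : Fin (σ.arity o) → A.carrier),
      (∀ i, r (x i) (y i)) → r (A.interp o x) (A.interp o y)

namespace Con

variable {A : Algebra σ}

instance : LE (Con A) := ⟨fun c d => ∀ a b : A.carrier, c.r a b → d.r a b⟩
instance : LT (Con A) := ⟨fun c d => c ≤ d ∧ ¬ d ≤ c⟩

/-- The total congruence `1_A`. -/
def top : Con A where
  r := fun _ _ => True
  refl := fun _ => trivial
  symm := fun _ => trivial
  trans := fun _ _ => trivial
  compat := fun _ _ _ _ => trivial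

/-- The identity congruence `0_A`. -/
def bot : Con A where
  r := fun a b => a = b
  refl := fun _ => rfl
  symm := fun h => h.symm
  trans := fun h h' => h.trans h'
  compat := fun o _ _ h => congrArg (A.interp o) (funext h)

/-- Meet of an arbitrary family of congruences (intersection). -/
def sInf (S : Set (Con A)) : Con A where
  r a b := ∀ c ∈ S, c.r a b
  refl a c _ := c.refl a
  symm h c hc := c.symm (h c hc)
  trans h h' c hc := c.trans (h c hc) (h' c hc)
  compat o x y h c hc := c.compat o x y (fun i => h i c hc)

/-- Binary meet of congruences. -/
def inf (c d : Con A) : Con A where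
  r a b := c.r a b ∧ d.r a b
  refl a := ⟨c.refl a, d.refl a⟩
  symm h := ⟨c.symm h.1, d.symm h.2⟩
  trans h h' := ⟨c.trans h.1 h'.1, d.trans h.2 h'.2⟩
  compat o x y h := ⟨c.compat o x y fun i => (h i).1, d.compat o x y fun i => (h i).2⟩

/-- The congruence generated by a set of pairs. -/
def conGen (S : Set (A.carrier × A.carrier)) : Con A :=
  sInf {c : Con A | ∀ p ∈ S, c.r p.1 p.2}

/-- Binary join of congruences. -/
def sup (c d : Con A) : Con A := conGen {p | c.r p.1 p.2 ∨ d.r p.1 p.2}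

/-- Join of a family of congruences. -/
def iSup {I : Type} (f : I → Con A) : Con A := conGen {p | ∃ i, (f i).r p.1 p.2}

/-- Composition of congruences as binary relations. -/
def comp (c d : Con A) (a b : A.carrier) : Prop := ∃ x, c.r a x ∧ d.r x b

/-- `d` covers `c` in the congruence lattice. -/
def Covers (c d : Con A) : Prop := c < d ∧ ∀ e : Con A, c < e → e ≤ d → e = d

theorem le_sup_right {c d : Con A} : d ≤ sup c d :=
  fun a b h e he => he (a, b) (Or.inr h)

def toSetoid (c : Con A) : Setoid A.carrier := ⟨c.r, ⟨c.refl, c.symm, c.trans⟩⟩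

end Con

/-- The quotient algebra `A/γ`. -/
noncomputable def quotAlg (A : Algebra σ) (γ : Con A) : Algebra σ where
  carrier := Quotient γ.toSetoid
  interp o x := Quotient.mk γ.toSetoid (A.interp o (fun i => (x i).out))

/-- The quotient congruence `α/γ` for `γ ≤ α`. -/
noncomputable def Con.quot {A : Algebra σ} (α γ : Con A) (h : γ ≤ α) : Con (quotAlg A γ) where
  r x y := Quotient.liftOn₂ x y (fun a b => α.r a b)
    (fun a b a' b' ha hb => propext
      ⟨fun hr => α.trans (α.symm (h _ _ ha)) (α.trans hr (h _ _ hb)),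
       fun hr => α.trans (h _ _ ha) (α.trans hr (α.symm (h _ _ hb)))⟩)
  refl x := Quotient.inductionOn x fun a => α.refl a
  symm {x y} h' := Quotient.inductionOn₂ x y (fun _ _ hab => α.symm hab) h'
  trans {x y z} h1 h2 :=
    Quotient.inductionOn₃ x y z (fun _ _ _ hab hbc => α.trans hab hbc) h1 h2
  compat o x y hxy := by
    show α.r (A.interp o fun i => (x i).out) (A.interp o fun i => (y i).out)
    refine α.compat o _ _ fun i => ?_
    have h1 := hxy i
    rw [← Quotient.out_eq (x i), ← Quotient.out_eq (y i)] at h1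
    exact h1

/-- The polynomial operations of an algebra: the clone generated by the basic
operations, the projections and the constants. -/
inductive IsPolynomial (A : Algebra σ) : {n : ℕ} → ((Fin n → A.carrier) → A.carrier) → Prop
  | proj {n : ℕ} (i : Fin n) : IsPolynomial A (fun x => x i)
  | const {n : ℕ} (a : A.carrier) : IsPolynomial A (fun _ : Fin n → A.carrier => a)
  | app {n : ℕ} (o : σ.ops) (g : Fin (σ.arity o) → (Fin n → A.carrier) → A.carrier) :
      (∀ j, IsPolynomial A (g j)) → IsPolynomial A (fun x => A.interp o (fun j => g j x))

/-- Substituting, coordinatewise according to the grouping `g` and the choice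
vector `ε`, the entries of `b` (where `ε` is `true`) or of `a` (where `ε` is `false`). -/
def chooseVec {β : Type} {N n : ℕ} (g : Fin N → Fin n) (a b : Fin N → β)
    (ε : Fin n → Bool) : Fin N → β :=
  fun i => if ε (g i) then b i else a i

/-- The higher centralizer relation `C(α₁,…,αₙ,β;δ)` of Bulatov.  Polynomials with
grouped variables are modelled by a polynomial `p` of arity `N` together with a
grouping map `g : Fin N → Fin (n+1)`; the group `Fin.last n` is the `β`-group. -/
def Centralizes {A : Algebra σ} {n : ℕ} (α : Fin n → Con A) (β δ : Con A) : Prop :=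
  ∀ (N : ℕ) (p : (Fin N → A.carrier) → A.carrier), IsPolynomial A p →
    ∀ (g : Fin N → Fin (n + 1)) (a b : Fin N → A.carrier),
      (∀ i, (Fin.lastCases (motive := fun _ => Con A) β α (g i)).r (a i) (b i)) →
      (∀ ε : Fin n → Bool, ε ≠ (fun _ => true) →
        δ.r (p (chooseVec g a b (Fin.lastCases (motive := fun _ => Bool) false ε)))
            (p (chooseVec g a b (Fin.lastCases (motive := fun _ => Bool) true ε)))) →
      δ.r (p (chooseVec g a b (Fin.lastCases (motive := fun _ => Bool) false fun _ => true)))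
          (p (chooseVec g a b (Fin.lastCases (motive := fun _ => Bool) true fun _ => true)))

/-- The higher commutator `[α₁,…,αₙ,β]`: the smallest congruence `δ` such that
`C(α₁,…,αₙ,β;δ)` holds. -/
def commutator {A : Algebra σ} {n : ℕ} (α : Fin n → Con A) (β : Con A) : Con A :=
  Con.sInf {δ : Con A | Centralizes α β δ}

/-- The higher commutator of a nonempty list of congruences, with the convention
`[α] = α` for a single congruence. -/
def commList {A : Algebra σ} : {n : ℕ} → (Fin (n + 1) → Con A) → Con A
  | 0, γ => γ 0
  | (n+1), γ => commutator (fun j : Fin (n+1) => γ j.castSucc) (γ (Fin.last (n+1)))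

/-- The `m`-fold commutator `[θ,…,θ]_m` (for `m ≥ 1`). -/
def nfold {A : Algebra σ} (θ : Con A) (m : ℕ) : Con A :=
  commList (fun _ : Fin (m - 1 + 1) => θ)

/-- The binary commutator `[c,d]`. -/
def binComm {A : Algebra σ} (c d : Con A) : Con A := commutator (fun _ : Fin 1 => c) d

/-- The lower central series `(θ]ⁿ`. -/
def lcs {A : Algebra σ} (θ : Con A) : ℕ → Con A
  | 0 => θ
  | (k+1) => binComm θ (lcs θ k)

/-- The derived series `[θ]ⁿ`. -/
def derived {A : Algebra σ} (θ : Con A) : ℕ → Con A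
  | 0 => θ
  | (k+1) => binComm (derived θ k) (derived θ k)

/-- An algebra is nilpotent if some term of the lower central series of `1_A` is `0_A`. -/
def Nilpotent (A : Algebra σ) : Prop := ∃ m, lcs (Con.top : Con A) m = Con.bot

/-- An algebra is nilpotent of class `n` if `(1_A]ⁿ = 0_A`. -/
def NilpotentOfClass (A : Algebra σ) (n : ℕ) : Prop := lcs (Con.top : Con A) n = Con.bot

/-- A congruence is solvable if some term of its derived series is `0_A`. -/
def SolvableCon {A : Algebra σ} (θ : Con A) : Prop := ∃ m, derived θ m = Con.bot

/-- `A` is `n`-supernilpotent if `[1_A,…,1_A]_n = 0_A`. -/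
def Supernilpotent (A : Algebra σ) (n : ℕ) : Prop := nfold (Con.top : Con A) n = Con.bot

/-- A polynomial `f` absorbs the tuple `a` to the element `c`. -/
def Absorbs (A : Algebra σ) {k : ℕ} (f : (Fin k → A.carrier) → A.carrier)
    (a : Fin k → A.carrier) (c : A.carrier) : Prop :=
  ∀ b : Fin k → A.carrier, (∃ i, b i = a i) → f b = c

/-- Terms over a signature with variables in `X`. -/
inductive Term (σ : Signature) (X : Type) : Type
  | var : X → Term σ X
  | app : (o : σ.ops) → (Fin (σ.arity o) → Term σ X) → Term σ X

/-- Evaluation of a term in an algebra under an assignment of the variables. -/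
def Term.eval {X : Type} (A : Algebra σ) (v : X → A.carrier) : Term σ X → A.carrier
  | Term.var x => v x
  | Term.app o t => A.interp o fun i => Term.eval A v (t i)

/-- Substitution of terms into a term. -/
def Term.subst {X Y : Type} : Term σ X → (X → Term σ Y) → Term σ Y
  | Term.var x, s => s x
  | Term.app o t, s => Term.app o fun i => Term.subst (t i) s

/-- `A` possesses a Mal'cev term. -/
def HasMalcevTerm (A : Algebra σ) : Prop :=
  ∃ t : Term σ (Fin 3), ∀ a b : A.carrier,
    t.eval A ![a, b, b] = a ∧ t.eval A ![b, b, a] = a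

/-- A class of algebras is a variety when it is the class of all models of a set
of identities. -/
def IsVariety (V : Algebra σ → Prop) : Prop :=
  ∃ E : Set (Term σ ℕ × Term σ ℕ),
    ∀ A : Algebra σ, V A ↔ ∀ e ∈ E, ∀ v : ℕ → A.carrier, e.1.eval A v = e.2.eval A v

/-- Two terms are `V`-equivalent when they evaluate equally in every member of `V`. -/
def vSetoid (V : Algebra σ → Prop) (X : Type) : Setoid (Term σ X) where
  r t s := ∀ A : Algebra σ, V A → ∀ v : X → A.carrier, t.eval A v = s.eval A v
  iseqv := ⟨fun _ _ _ _ => rfl, fun h A hA v => (h A hA v).symm,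
    fun h h' A hA v => (h A hA v).trans (h' A hA v)⟩

/-- The `V`-free algebra on the set `X` of generators. -/
noncomputable def freeAlg (V : Algebra σ → Prop) (X : Type) : Algebra σ where
  carrier := Quotient (vSetoid V X)
  interp o x := Quotient.mk (vSetoid V X) (Term.app o fun i => (x i).out)

/-- The principal congruence `θ(a,b)` generated by the pair `(a,b)`. -/
def conPair (A : Algebra σ) (a b : A.carrier) : Con A := Con.conGen {(a, b)}

/-- A weak difference term for the class `V`. -/
def IsWeakDiffTerm (V : Algebra σ → Prop) (c : Term σ (Fin 3)) : Prop :=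
  ∀ A : Algebra σ, V A → ∀ a b : A.carrier,
    (binComm (conPair A a b) (conPair A a b)).r (c.eval A ![a, b, b]) a ∧
    (binComm (conPair A a b) (conPair A a b)).r a (c.eval A ![b, b, a])

/-- A weak `n`-difference term for the class `V`. -/
def IsWeakNDiffTerm (V : Algebra σ → Prop) (n : ℕ) (c : Term σ (Fin 3)) : Prop :=
  ∀ A : Algebra σ, V A → ∀ a b : A.carrier,
    (nfold (conPair A a b) n).r (c.eval A ![a, b, b]) a ∧
    (nfold (conPair A a b) n).r a (c.eval A ![b, b, a])

/-- Order-preserving maps on the congruence lattice. -/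
def MonotoneCon {A : Algebra σ} (F : Con A → Con A) : Prop :=
  ∀ c d : Con A, c ≤ d → F c ≤ F d

/-- `p` is a weak `f`-term of `A` with respect to the interpretation `F`. -/
def IsWeakFTerm (A : Algebra σ) (F : Con A → Con A) (p : Term σ (Fin 3)) : Prop :=
  ∀ (θ : Con A) (a b : A.carrier), θ.r a b →
    (F θ).r (p.eval A ![a, b, b]) a ∧ (F θ).r a (p.eval A ![b, b, a])

/-- `p` is a weak `f`-term for the class `V`. -/
def HasWeakFTermVariety (V : Algebra σ → Prop) (p : Term σ (Fin 3)) : Prop :=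
  ∀ A : Algebra σ, V A → ∃ F : Con A → Con A, MonotoneCon F ∧ IsWeakFTerm A F p

/-- The set `T^θ_{n,f}(θ₁,…,θₙ)` of pairs coming from polynomials which
`f(θ)`-absorb on the cube `{ā₁,b̄₁}×⋯×{āₙ,b̄ₙ}`. -/
def TSet (A : Algebra σ) (F : Con A → Con A) (θ : Con A) {n : ℕ} (θs : Fin n → Con A) :
    Set (A.carrier × A.carrier) :=
  {pr | ∃ (N : ℕ) (g : (Fin N → A.carrier) → A.carrier), IsPolynomial A g ∧
    ∃ (gr : Fin N → Fin n) (a b : Fin N → A.carrier),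
      (∀ i, (θs (gr i)).r (a i) (b i)) ∧
      (∀ ε : Fin n → Bool, (∃ j, ε j = false) →
        (F θ).r (g (fun i => if ε (gr i) then b i else a i)) (g a)) ∧
      pr = (g b, g a)}

/-- Homomorphisms of algebras. -/
def IsHom (A B : Algebra σ) (h : A.carrier → B.carrier) : Prop :=
  ∀ (o : σ.ops) (x : Fin (σ.arity o) → A.carrier),
    h (A.interp o x) = B.interp o (fun i => h (x i))

/-- The product of a family of algebras. -/
def prodAlg {I : Type} (As : I → Algebra σ) : Algebra σ where
  carrier := ∀ i, (As i).carrier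
  interp o x i := (As i).interp o (fun j => x j i)

/-- The subuniverse generated by a subset. -/
inductive Gen (A : Algebra σ) (S : Set A.carrier) : A.carrier → Prop
  | base {a : A.carrier} : a ∈ S → Gen A S a
  | app (o : σ.ops) (x : Fin (σ.arity o) → A.carrier) :
      (∀ i, Gen A S (x i)) → Gen A S (A.interp o x)

/-- `A` possesses a Taylor term. -/
def HasTaylorTerm (A : Algebra σ) : Prop :=
  ∃ (n : ℕ) (t : Term σ (Fin n)), 1 ≤ n ∧
    (∀ a : A.carrier, t.eval A (fun _ => a) = a) ∧
    ∀ i : Fin n, ∃ u v : Fin n → Bool, u i = true ∧ v i = false ∧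
      ∀ x y : A.carrier,
        t.eval A (fun j => if u j then x else y) = t.eval A (fun j => if v j then x else y)

/-- The variety `V` possesses a Taylor term. -/
def VarietyHasTaylorTerm (V : Algebra σ → Prop) : Prop :=
  ∃ (n : ℕ) (t : Term σ (Fin n)), 1 ≤ n ∧
    (∀ A : Algebra σ, V A → ∀ a : A.carrier, t.eval A (fun _ => a) = a) ∧
    ∀ i : Fin n, ∃ u v : Fin n → Bool, u i = true ∧ v i = false ∧
      ∀ A : Algebra σ, V A → ∀ x y : A.carrier,
        t.eval A (fun j => if u j then x else y) = t.eval A (fun j => if v j then x else y)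

/-- `Ξ(θ)`: the smallest set of congruences containing `θ` and closed under
higher commutators (of arity at least 2) of its members. -/
inductive Xi {A : Algebra σ} (θ : Con A) : Con A → Prop
  | base : Xi θ θ
  | comm {k : ℕ} (γ : Fin (k + 2) → Con A) : (∀ j, Xi θ (γ j)) → Xi θ (commList γ)

/-- An expanded loop on the carrier `α` with extra operations indexed by `ι`. -/
structure ExpLoop (ι : Type) (ar : ι → ℕ) (α : Type) : Type where
  mul : α → α → α
  ldiv : α → α → α
  rdiv : α → α → α
  zero : α
  extra : (i : ι) → (Fin (ar i) → α) → α
  ldiv_mul : ∀ x y, ldiv x (mul x y) = y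
  mul_rdiv : ∀ x y, rdiv (mul x y) y = x
  mul_ldiv : ∀ x y, mul x (ldiv x y) = y
  rdiv_mul : ∀ x y, mul (rdiv x y) y = x
  zero_mul : ∀ x, mul zero x = x
  mul_zero : ∀ x, mul x zero = x

/-- Operation symbols of an expanded loop. -/
inductive LoopOp (ι : Type) : Type
  | mul | ldiv | rdiv | zero
  | extra : ι → LoopOp ι

/-- The signature of an expanded loop. -/
@[reducible] def loopSig (ι : Type) (ar : ι → ℕ) : Signature where
  ops := LoopOp ι
  arity o := match o with
    | .mul => 2
    | .ldiv => 2
    | .rdiv => 2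
    | .zero => 0
    | .extra i => ar i

/-- The algebra underlying an expanded loop. -/
def ExpLoop.toAlgebra {ι : Type} {ar : ι → ℕ} {α : Type} (L : ExpLoop ι ar α) :
    Algebra (loopSig ι ar) where
  carrier := α
  interp o := match o with
    | .mul => fun x => L.mul (x 0) (x 1)
    | .ldiv => fun x => L.ldiv (x 0) (x 1)
    | .rdiv => fun x => L.rdiv (x 0) (x 1)
    | .zero => fun _ => L.zero
    | .extra i => L.extra i

/-- An expanded loop is of `n`-type. -/
def ExpLoop.IsNType {ι : Type} {ar : ι → ℕ} {α : Type} (L : ExpLoop ι ar α) (n : ℕ) : Prop :=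
  (∀ p : Σ k : ℕ, (Fin k → α) → α,
      (∃ i : ι, p = ⟨ar i, L.extra i⟩) ↔
        (1 ≤ p.1 ∧ p.1 ≤ n - 1 ∧ IsPolynomial L.toAlgebra p.2 ∧
          Absorbs L.toAlgebra p.2 (fun _ => L.zero) L.zero)) ∧
  (∀ f : (Fin (n - 1) → α) → α,
      IsPolynomial L.toAlgebra f → Absorbs L.toAlgebra f (fun _ => L.zero) L.zero →
      ∀ (j : Fin (n - 1)) (x : Fin (n - 1) → α) (u v : α),
        f (Function.update x j (L.mul u v)) =
          L.mul (f (Function.update x j u)) (f (Function.update x j v))) ∧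
  (∀ k : ℕ, 2 ≤ k → k < n →
      commList (Fin.snoc (fun _ : Fin (n - k) => (Con.top : Con L.toAlgebra))
        (nfold Con.top k)) = Con.bot)

/-- `A` is polynomially equivalent to an `n`-type expanded loop on the same carrier. -/
def PolyEquivNTypeLoop (A : Algebra σ) (n : ℕ) : Prop :=
  ∃ (ι : Type) (ar : ι → ℕ) (L : ExpLoop ι ar A.carrier),
    L.IsNType n ∧
    ∀ (k : ℕ) (f : (Fin k → A.carrier) → A.carrier),
      IsPolynomial A f ↔ IsPolynomial L.toAlgebra f

/-- Left-associated product of a list with initial value `c`. -/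
def lprodFrom {β : Type} (mul : β → β → β) (c : β) (l : List β) : β := List.foldl mul c l

/-- Left-associated product of a list (with a default value for the empty list). -/
def lprodList {β : Type} (mul : β → β → β) (dflt : β) : List β → β
  | [] => dflt
  | a :: l => List.foldl mul a l

/-- Left-associated product of a nonempty tuple. -/
def lassoc {β : Type} (mul : β → β → β) : {m : ℕ} → (Fin (m + 1) → β) → β
  | 0, y => y 0
  | (m+1), y => mul (lassoc mul (Fin.init y)) (y (Fin.last (m+1)))

/-- `A` has a representation of degree `n`. -/
def HasRepOfDegree (A : Algebra σ) (n : ℕ) : Prop :=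
  ∃ (z : A.carrier) (r : (Fin 2 → A.carrier) → A.carrier),
    IsPolynomial A r ∧ (∀ x : A.carrier, r ![z, x] = x) ∧ (∀ x : A.carrier, r ![x, z] = x) ∧
    ∀ (k : ℕ) (f : (Fin k → A.carrier) → A.carrier), IsPolynomial A f →
      ∃ (c : A.carrier) (R : ℕ → (Fin k → A.carrier) → A.carrier),
        (∀ m : ℕ, 1 ≤ m → m ≤ min k n →
          ∃ (l : List (Finset (Fin k)))
            (t : (S : Finset (Fin k)) → (Fin S.card → A.carrier) → A.carrier),
            l.Nodup ∧
            (∀ S : Finset (Fin k), S ∈ l ↔ S.card = m) ∧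
            (∀ S ∈ l, IsPolynomial A (t S) ∧ Absorbs A (t S) (fun _ => z) z) ∧
            (∀ x : Fin k → A.carrier,
              R m x = lprodList (fun u v => r ![u, v]) z
                (l.map (fun S => t S (fun j => x ((S.orderIsoOfFin rfl j).val)))))) ∧
        ∀ x : Fin k → A.carrier,
          f x = lprodFrom (fun u v => r ![u, v]) c
            ((List.range' 1 (min k n)).map (fun m => R m x))

/-- Products of `0`-absorbing polynomials (of arities between `lo` and `hi`)
in a given set of variables. -/
inductive ProdOfAbs {ι : Type} {ar : ι → ℕ} {α : Type} (L : ExpLoop ι ar α)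
    (lo hi : ℕ) {I : Type} : ((I → α) → α) → Prop
  | base {p : ℕ} (h : (Fin p → α) → α) (sel : Fin p → I) :
      lo ≤ p → p ≤ hi → IsPolynomial L.toAlgebra h →
      Absorbs L.toAlgebra h (fun _ => L.zero) L.zero →
      ProdOfAbs L lo hi (fun v => h (fun j => v (sel j)))
  | mul {F G : (I → α) → α} :
      ProdOfAbs L lo hi F → ProdOfAbs L lo hi G →
      ProdOfAbs L lo hi (fun v => L.mul (F v) (G v))

/-- The terms `q_m` (for `m ≥ 2`, `qSeq q (m-2)` is `q_m`):
`q₂ := q`, `q_{m+1}(x,y,z) := q(x, q_m(x,y,y), q_m(x,y,z))`. -/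
def qSeq (q : Term σ (Fin 3)) : ℕ → Term σ (Fin 3)
  | 0 => q
  | (k+1) => q.subst ![Term.var 0, (qSeq q k).subst ![Term.var 0, Term.var 1, Term.var 1], qSeq q k]


theorem IsPolynomial.con {σ : Signature} {A : Algebra σ} (c : Con A) {n : ℕ}
    {p : (Fin n → A.carrier) → A.carrier} (hp : IsPolynomial A p) (x y : Fin n → A.carrier)
    (h : ∀ i, c.r (x i) (y i)) : c.r (p x) (p y) := by
  induction hp with
  | proj i => exact h i
  | const a => exact c.refl a
  | app o g _ ih => exact c.compat o _ _ fun j => ih j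

theorem coord_induction {X : Type} {m : ℕ} (R : X → X → Prop) (Q : (Fin m → X) → Prop)
    (hQ : ∀ z i v, R (z i) v → Q z → Q (Function.update z i v))
    (x y : Fin m → X) (hx : Q x) (h : ∀ i, Relation.ReflTransGen R (x i) (y i)) : Q y := by
  have one : ∀ z i v, Relation.ReflTransGen R (z i) v → Q z → Q (Function.update z i v) := by
    intro z i v hv hz
    induction hv with
    | refl => simpa using hz
    | tail _ hbc ih =>
      have := hQ _ i _ (by simpa using hbc) ih
      simpa using this
  have key : ∀ s : Finset (Fin m), Q (s.piecewise y x) := by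
    intro s
    induction s using Finset.induction_on with
    | empty => simpa using hx
    | insert i s hi ih =>
      rw [Finset.piecewise_insert]
      apply one _ _ _ _ ih
      rw [Finset.piecewise_eq_of_notMem _ _ _ hi]
      exact h i
  have := key Finset.univ
  simpa using this

theorem sup_chain {σ : Signature} {A : Algebra σ} (c d : Con A) (a b : A.carrier)
    (h : (Con.sup c d).r a b) :
    Relation.ReflTransGen (fun u v => c.r u v ∨ d.r u v) a b := by
  let e : Con A :=
    { r := Relation.ReflTransGen (fun u v => c.r u v ∨ d.r u v)
      refl := fun _ => Relation.ReflTransGen.refl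
      symm := fun {a b} hab => by
        induction hab with
        | refl => exact Relation.ReflTransGen.refl
        | tail _ hbc ih => exact Relation.ReflTransGen.head (hbc.imp c.symm d.symm) ih
      trans := fun h h' => h.trans h'
      compat := fun o x y hxy => by
        refine coord_induction (fun u v => c.r u v ∨ d.r u v)
          (fun z => Relation.ReflTransGen (fun u v => c.r u v ∨ d.r u v)
            (A.interp o x) (A.interp o z)) ?_ x y Relation.ReflTransGen.refl hxy
        intro z i v hv hz
        refine hz.tail ?_
        refine hv.imp ?_ ?_
        · intro hv
          refine c.compat o _ _ fun j => ?_
          by_cases hj : j = i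
          · subst hj; simpa using hv
          · simpa [hj] using c.refl _
        · intro hv
          refine d.compat o _ _ fun j => ?_
          by_cases hj : j = i
          · subst hj; simpa using hv
          · simpa [hj] using d.refl _ }
  exact h e (fun p hp => Relation.ReflTransGen.single hp)

theorem cent_mono {σ : Signature} {A : Algebra σ} (n : ℕ) (α α' : Fin n → Con A)
    (β β' δ : Con A) (hα : ∀ i, α i ≤ α' i) (hβ : β ≤ β') (h : Centralizes α' β' δ) :
    Centralizes α β δ := by
  intro N p hp g a b hab hε
  refine h N p hp g a b (fun i => ?_) hε
  have := hab i
  revert this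
  refine Fin.lastCases ?_ (fun j => ?_) (g i)
  · simpa using hβ _ _
  · simpa using hα j _ _

theorem cent_perm {σ : Signature} {A : Algebra σ} (n : ℕ) (α : Fin n → Con A)
    (β δ : Con A) (e : Equiv.Perm (Fin n)) (h : Centralizes α β δ) :
    Centralizes (fun i => α (e i)) β δ := by
  intro N p hp g a b hab hε
  let f : Fin (n+1) → Fin (n+1) :=
    Fin.lastCases (motive := fun _ => Fin (n+1)) (Fin.last n) (fun j => (e j).castSucc)
  have key : ∀ (t : Bool) (ε : Fin n → Bool),
      chooseVec (fun i => f (g i)) a b (Fin.lastCases (motive := fun _ => Bool) t ε)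
        = chooseVec g a b (Fin.lastCases (motive := fun _ => Bool) t (fun j => ε (e j))) := by
    intro t ε
    funext i
    have hx : ∀ x, Fin.lastCases (motive := fun _ => Bool) t ε (f x)
        = Fin.lastCases (motive := fun _ => Bool) t (fun j => ε (e j)) x := by
      intro x
      refine Fin.lastCases ?_ (fun j => ?_) x <;> simp [f]
    simp only [chooseVec, hx]
  have := h N p hp (fun i => f (g i)) a b (fun i => ?_) (fun ε hne => ?_)
  · rw [key, key] at this
    exact this
  · have := hab i
    revert this
    refine Fin.lastCases ?_ (fun j => ?_) (g i) <;> simp [f]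
  · rw [key, key]
    apply hε
    intro hh
    apply hne
    funext j
    simpa using congrFun hh (e.symm j)

theorem cent_delete {σ : Signature} {A : Algebra σ} (n : ℕ) (α : Fin (n + 1) → Con A)
    (β δ : Con A) (k : Fin (n + 1))
    (h : Centralizes (fun j : Fin n => α (k.succAbove j)) β δ) : Centralizes α β δ := by
  intro N p hp g a b hab hε
  let f : Fin (n+2) → Fin (n+1) :=
    Fin.lastCases (motive := fun _ => Fin (n+1)) (Fin.last n)
      (fun j => k.succAboveCases (α := fun _ => Fin (n+1)) (Fin.last n) Fin.castSucc j)
  let a' : Fin N → A.carrier := fun i => if g i = k.castSucc then b i else a i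
  have key : ∀ (t : Bool) (ε : Fin n → Bool),
      chooseVec (fun i => f (g i)) a' b (Fin.lastCases (motive := fun _ => Bool) t ε)
        = chooseVec g a b (Fin.lastCases (motive := fun _ => Bool) t
            (k.succAboveCases (α := fun _ => Bool) true ε)) := by
    intro t ε
    funext i
    unfold chooseVec
    simp only [a']
    refine Fin.lastCases ?_ (fun j => ?_) (g i)
    · have : Fin.last (n+1) ≠ k.castSucc := (Fin.castSucc_lt_last k).ne'
      simp [f, this]
    · refine k.succAboveCases ?_ (fun j => ?_) j
      · simp [f]
      · simp [f, Fin.succAbove_ne]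
  have hone : (k.succAboveCases (α := fun _ => Bool) true fun _ => true) = fun _ => true := by
    funext j
    refine k.succAboveCases ?_ (fun j => ?_) j <;> simp
  have := h N p hp (fun i => f (g i)) a' b (fun i => ?_) (fun ε hne => ?_)
  · rw [key, key, hone] at this
    exact this
  · have := hab i
    revert this
    simp only [a']
    refine Fin.lastCases ?_ (fun j => ?_) (g i)
    · have : Fin.last (n+1) ≠ k.castSucc := (Fin.castSucc_lt_last k).ne'
      simp [f, this]
    · refine k.succAboveCases ?_ (fun j => ?_) j
      · intro _
        simpa using Con.refl _ _
      · simp [f, Fin.succAbove_ne]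
  · rw [key, key]
    apply hε
    intro hh
    apply hne
    funext j
    simpa using congrFun hh (k.succAbove j)

theorem quot_interp {σ : Signature} {A : Algebra σ} (γ : Con A) (o : σ.ops)
    (x : Fin (σ.arity o) → A.carrier) :
    (quotAlg A γ).interp o (fun j => Quotient.mk γ.toSetoid (x j))
      = Quotient.mk γ.toSetoid (A.interp o x) := by
  refine Quotient.sound (s := γ.toSetoid) ?_
  exact γ.compat o _ _ fun j => Quotient.exact (s := γ.toSetoid) (Quotient.out_eq _)

theorem poly_lift {σ : Signature} {A : Algebra σ} (γ : Con A) {n : ℕ}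
    {q : (Fin n → (quotAlg A γ).carrier) → (quotAlg A γ).carrier}
    (hq : IsPolynomial (quotAlg A γ) q) :
    ∃ p, IsPolynomial A p ∧
      ∀ x : Fin n → A.carrier, q (fun i => Quotient.mk γ.toSetoid (x i))
        = Quotient.mk γ.toSetoid (p x) := by
  induction hq with
  | proj i => exact ⟨_, .proj i, fun _ => rfl⟩
  | const a => exact ⟨_, .const (Quotient.out a), fun _ => (Quotient.out_eq _).symm⟩
  | app o g _ ih =>
    choose p hp hx using ih
    refine ⟨_, .app o p hp, fun x => ?_⟩
    simp only [hx]
    exact quot_interp γ o _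

theorem poly_down {σ : Signature} {A : Algebra σ} (γ : Con A) {n : ℕ}
    {p : (Fin n → A.carrier) → A.carrier} (hp : IsPolynomial A p) :
    ∃ q, IsPolynomial (quotAlg A γ) q ∧
      ∀ x : Fin n → A.carrier, q (fun i => Quotient.mk γ.toSetoid (x i))
        = Quotient.mk γ.toSetoid (p x) := by
  induction hp with
  | proj i => exact ⟨_, .proj i, fun _ => rfl⟩
  | const a => exact ⟨_, .const (Quotient.mk γ.toSetoid a), fun _ => rfl⟩
  | app o g _ ih =>
    choose p hp hx using ih
    refine ⟨_, .app o p hp, fun x => ?_⟩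
    simp only [hx]
    exact quot_interp γ o _

theorem chooseVec_map {X Y : Type} (f : X → Y) {N n : ℕ} (g : Fin N → Fin n) (a b : Fin N → X)
    (ε : Fin n → Bool) :
    chooseVec g (fun i => f (a i)) (fun i => f (b i)) ε = fun i => f (chooseVec g a b ε i) := by
  funext i
  unfold chooseVec
  split <;> rfl

theorem quot_rel {σ : Signature} {A : Algebra σ} {n : ℕ} (α : Fin n → Con A)
    (β γ : Con A) (hα : ∀ i, γ ≤ α i) (hβ : γ ≤ β) (i : Fin (n+1)) (a b : A.carrier) :
    (Fin.lastCases (motive := fun _ => Con (quotAlg A γ)) (β.quot γ hβ)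
      (fun i => (α i).quot γ (hα i)) i).r (Quotient.mk γ.toSetoid a) (Quotient.mk γ.toSetoid b)
      ↔ (Fin.lastCases (motive := fun _ => Con A) β α i).r a b := by
  refine Fin.lastCases ?_ (fun j => ?_) i
  · simp only [Fin.lastCases_last]; exact Iff.rfl
  · simp only [Fin.lastCases_castSucc]; exact Iff.rfl

theorem cent_quot {σ : Signature} {A : Algebra σ} (n : ℕ) (α : Fin n → Con A)
    (β δ γ : Con A) (hα : ∀ i, γ ≤ α i) (hβ : γ ≤ β) (hδ : γ ≤ δ) :
    Centralizes α β δ ↔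
      Centralizes (fun i => (α i).quot γ (hα i)) (β.quot γ hβ) (δ.quot γ hδ) := by
  constructor
  · intro h N q hq g a b
    obtain ⟨a, rfl⟩ : ∃ a0 : Fin N → A.carrier, a = fun i => Quotient.mk γ.toSetoid (a0 i) :=
      ⟨fun i => Quotient.out (a i), funext fun i => (Quotient.out_eq _).symm⟩
    obtain ⟨b, rfl⟩ : ∃ a0 : Fin N → A.carrier, b = fun i => Quotient.mk γ.toSetoid (a0 i) :=
      ⟨fun i => Quotient.out (b i), funext fun i => (Quotient.out_eq _).symm⟩
    obtain ⟨p, hp, hx⟩ := poly_lift γ hq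
    intro hab hε
    have e : ∀ ε, q (chooseVec g (fun i => Quotient.mk γ.toSetoid (a i))
        (fun i => Quotient.mk γ.toSetoid (b i)) ε)
          = Quotient.mk γ.toSetoid (p (chooseVec g a b ε)) := fun ε =>
      (congrArg q (chooseVec_map (Quotient.mk γ.toSetoid) g a b ε)).trans (hx _)
    rw [e, e]
    refine h N p hp g a b (fun i => (quot_rel α β γ hα hβ _ _ _).1 (hab i)) fun ε hne => ?_
    have := hε ε hne
    rw [e, e] at this
    exact this
  · intro h N p hp g a b hab hε
    obtain ⟨q, hq, hx⟩ := poly_down γ hp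
    have e : ∀ ε, q (chooseVec g (fun i => Quotient.mk γ.toSetoid (a i))
        (fun i => Quotient.mk γ.toSetoid (b i)) ε)
          = Quotient.mk γ.toSetoid (p (chooseVec g a b ε)) := fun ε =>
      (congrArg q (chooseVec_map (Quotient.mk γ.toSetoid) g a b ε)).trans (hx _)
    have := h N q hq g (fun i => Quotient.mk γ.toSetoid (a i))
      (fun i => Quotient.mk γ.toSetoid (b i))
      (fun i => (quot_rel α β γ hα hβ _ _ _).2 (hab i)) (fun ε hne => by
        rw [e, e]
        exact hε ε hne)
    rw [e, e] at this
    exact this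

theorem cent_join {σ : Signature} {A : Algebra σ} (n : ℕ) (α : Fin n → Con A)
    (lastc δ β γ : Con A) (k : Fin n)
    (h1 : ∀ a b : A.carrier, lastc.r a b →
        (∃ x y, β.r a x ∧ (δ.r x y ∧ lastc.r x y) ∧ β.r y b) → δ.r a b)
    (h2 : ∀ a b : A.carrier, lastc.r a b →
        (∃ x y, γ.r a x ∧ (δ.r x y ∧ lastc.r x y) ∧ γ.r y b) → δ.r a b) :
    Centralizes (Function.update α k (Con.sup β γ)) lastc δ := by
  intro N p hp g a b hab hε
  let w : Bool → Fin N → A.carrier := fun t =>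
    chooseVec g a b (Fin.lastCases (motive := fun _ => Bool) t fun _ => true)
  let m : Bool → (Fin N → A.carrier) → (Fin N → A.carrier) := fun t z j =>
    if g j = k.castSucc then z j else w t j
  have hm : ∀ z, lastc.r (p (m false z)) (p (m true z)) := by
    intro z
    refine hp.con lastc _ _ fun j => ?_
    simp only [m]
    split
    · exact lastc.refl _
    · have := hab j
      revert this
      simp only [w, chooseVec]
      refine Fin.lastCases ?_ (fun i => ?_) (g j)
      · simp
      · intro _
        simpa using lastc.refl _
  have hstep : ∀ c : Con A, ∀ z i v, c.r (z i) v →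
      ∀ t, c.r (p (m t z)) (p (m t (Function.update z i v))) := by
    intro c z i v hv t
    refine hp.con c _ _ fun j => ?_
    simp only [m]
    split
    · by_cases hj : j = i
      · subst hj; simpa using hv
      · simpa [hj] using c.refl _
    · exact c.refl _
  have hfin := coord_induction (fun u v => β.r u v ∨ γ.r u v)
    (fun z => δ.r (p (m false z)) (p (m true z))) (by
      intro z i v hv hz
      rcases hv with hv | hv
      · exact h1 _ _ (hm _) ⟨_, _, β.symm (hstep β z i v hv false), ⟨hz, hm z⟩,
          hstep β z i v hv true⟩
      · exact h2 _ _ (hm _) ⟨_, _, γ.symm (hstep γ z i v hv false), ⟨hz, hm z⟩,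
          hstep γ z i v hv true⟩)
    a (fun j => if g j = k.castSucc then b j else a j) ?_ ?_
  · have e : ∀ t, m t (fun j => if g j = k.castSucc then b j else a j) = w t := by
      intro t
      funext j
      simp only [m]
      split
      · rename_i hj
        simp [w, chooseVec, hj]
      · rfl
    rw [e, e] at hfin
    exact hfin
  · have e : ∀ t, m t a = chooseVec g a b
        (Fin.lastCases (motive := fun _ => Bool) t (fun j => decide (j ≠ k))) := by
      intro t
      funext j
      simp only [m, w, chooseVec]
      refine Fin.lastCases ?_ (fun i => ?_) (g j)
      · have : Fin.last n ≠ k.castSucc := (Fin.castSucc_lt_last k).ne'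
        simp [this]
      · by_cases hik : i = k <;> simp [hik]
    show δ.r (p (m false a)) (p (m true a))
    rw [e, e]
    apply hε
    intro hh
    simpa using congrFun hh k
  · intro j
    split
    · rename_i hj
      have := hab j
      rw [hj] at this
      simp only [Fin.lastCases_castSucc, Function.update_self] at this
      exact sup_chain _ _ _ _ this
    · exact Relation.ReflTransGen.refl

/-- Basic properties of the higher centralizer relation
(Lemma 2.2 of "On Supernilpotent Algebras").  Here `C(α₁,…,αₙ,β;δ)` is written
`Centralizes α β δ` with `α : Fin n → Con A` the initial congruences and `β` the last one. -/
theorem centralizer_properties {σ : Signature} (A : Algebra σ) :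
    -- (1) intersection
    (∀ (n : ℕ) (α : Fin n → Con A) (β : Con A) (I : Type) (δt : I → Con A),
      (∀ t : I, Centralizes α β (δt t)) → Centralizes α β (Con.sInf (Set.range δt))) ∧
    -- (2) monotonicity
    (∀ (n : ℕ) (α α' : Fin n → Con A) (β β' δ : Con A),
      (∀ i, α i ≤ α' i) → β ≤ β' → Centralizes α' β' δ → Centralizes α β δ) ∧
    -- (3) permuting the initial congruences
    (∀ (n : ℕ) (α : Fin n → Con A) (β δ : Con A) (e : Equiv.Perm (Fin n)),
      Centralizes α β δ ↔ Centralizes (fun i => α (e i)) β δ) ∧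
    -- (4) quotients
    (∀ (n : ℕ) (α : Fin n → Con A) (β δ γ : Con A)
      (hα : ∀ i, γ ≤ α i) (hβ : γ ≤ β) (hδ : γ ≤ δ),
      Centralizes α β δ ↔
        Centralizes (fun i => (α i).quot γ (hα i)) (β.quot γ hβ) (δ.quot γ hδ)) ∧
    -- (5) deleting an initial congruence
    (∀ (n : ℕ) (α : Fin (n + 1) → Con A) (β δ : Con A) (i : Fin (n + 1)),
      Centralizes (fun j : Fin n => α (i.succAbove j)) β δ → Centralizes α β δ) ∧
    -- (6)
    (∀ (n : ℕ) (α : Fin n → Con A) (lastc δ β γ : Con A) (k : Fin n),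
      (∀ a b : A.carrier, lastc.r a b →
        (∃ x y, β.r a x ∧ (δ.r x y ∧ lastc.r x y) ∧ β.r y b) → δ.r a b) →
      (Centralizes (Function.update α k β) lastc δ ∧
        ((∀ a b : A.carrier, lastc.r a b →
            (∃ x y, γ.r a x ∧ (δ.r x y ∧ lastc.r x y) ∧ γ.r y b) → δ.r a b) →
          Centralizes (Function.update α k (Con.sup β γ)) lastc δ))) := by
  refine ⟨?_, fun n => cent_mono n, ?_, fun n => cent_quot n, fun n => cent_delete n, ?_⟩
  · intro n α β I δt h N p hp g a b hab hε c hc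
    obtain ⟨t, rfl⟩ := hc
    exact h t N p hp g a b hab fun ε hne => hε ε hne _ ⟨t, rfl⟩
  · intro n α β δ e
    refine ⟨cent_perm n α β δ e, fun h => ?_⟩
    have := cent_perm n _ β δ e.symm h
    simpa using this
  · intro n α lastc δ β γ k h1
    refine ⟨?_, cent_join n α lastc δ β γ k h1⟩
    refine cent_mono n _ _ _ _ _ (fun i => ?_) (fun _ _ h => h)
      (cent_join n α lastc δ β β k h1 h1)
    by_cases hi : i = k
    · subst hi
      simpa using Con.le_sup_right
    · simp only [Function.update_of_ne hi]
      exact fun _ _ h => h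

end UA
end

section
/- Let A be an algebra, let f be a k-ary polynomial of A, and suppose f absorbs (a₁,…,a_k) to a. Then for any partition n = n₁+⋯+n_k (each n_i ≥ 1) and any congruences α^i_j of A (i ∈ {1,…,k}, j ∈ {1,…,n_i}), f maps the product of classes a₁/[α¹₁,…,α¹_{n₁}] × ⋯ × a_k/[α^k₁,…,α^k_{n_k}] into the class a/[[α¹₁,…,α¹_{n₁}],…,[α^k₁,…,α^k_{n_k}]] (with the convention [α] = α for a single congruence). In particular, if A is n-supernilpotent, then for every m ≥ n the only m-ary a-absorbing polynomial of A is the constant map with value a. -/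
set_option autoImplicit false

namespace UA

variable {σ : Signature}

/-- Polynomials preserve congruences. -/
theorem poly_compat {A : Algebra σ} (θ : Con A) {N : ℕ} {p : (Fin N → A.carrier) → A.carrier}
    (hp : IsPolynomial A p) :
    ∀ x y : Fin N → A.carrier, (∀ i, θ.r (x i) (y i)) → θ.r (p x) (p y) := by
  induction hp with
  | proj i => exact fun x y h => h i
  | const c => exact fun x y _ => θ.refl c
  | app o g _ ih => exact fun x y h => θ.compat o _ _ fun j => ih j x y h

/-- Absorbing polynomials with grouped variables. -/
theorem absorb_grouped {A : Algebra σ} {n N : ℕ} (γ : Fin (n + 1) → Con A)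
    (p : (Fin N → A.carrier) → A.carrier) (hp : IsPolynomial A p)
    (a b : Fin N → A.carrier) (c : A.carrier) (habs : Absorbs A p a c)
    (grp : Fin N → Fin (n + 1)) (hs : Function.Surjective grp)
    (hr : ∀ i, (γ (grp i)).r (a i) (b i)) : (commList γ).r c (p b) := by
  cases n with
  | zero =>
    obtain ⟨i, _⟩ := hs 0
    rw [← habs a ⟨i, rfl⟩]
    refine poly_compat (γ 0) hp a b fun i => ?_
    have h := hr i
    rwa [show grp i = 0 from Fin.ext (by simp)] at h
  | succ n =>
    intro δ hδ
    have key : ∀ ε : Fin (n + 1 + 1) → Bool, (∃ j, ε j = false) →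
        p (chooseVec grp a b ε) = c := by
      rintro ε ⟨j, hj⟩
      obtain ⟨i, rfl⟩ := hs j
      exact habs _ ⟨i, by simp [chooseVec, hj]⟩
    have h := hδ N p hp grp a b
      (by
        intro i
        have h := hr i
        generalize grp i = j at h
        induction j using Fin.lastCases with
        | last => simpa using h
        | cast j => simpa using h)
      (by
        intro ε hε
        obtain ⟨j, hj⟩ := Function.ne_iff.mp hε
        rw [key _ ⟨Fin.last _, by simp⟩, key _ ⟨j.castSucc, by simpa using hj⟩]
        exact δ.refl c)
    rw [key _ ⟨Fin.last _, by simp⟩] at h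
    have e : chooseVec grp a b
        (Fin.lastCases (motive := fun _ => Bool) true fun _ => true) = b := by
      funext i
      have : ∀ j : Fin (n + 1 + 1),
          (Fin.lastCases (motive := fun _ => Bool) true (fun _ => true) j : Bool) = true := by
        intro j
        induction j using Fin.lastCases <;> simp
      simp only [chooseVec, this, if_true]
    rwa [e] at h

/-- Lemma 3.2 of "On Supernilpotent Algebras": an absorbing polynomial maps products of
commutator classes into a class of the commutator of commutators; in particular, in an
`n`-supernilpotent algebra every `m`-ary (`m ≥ n`) `a`-absorbing polynomial is constant. -/
theorem absorbing_polynomial_commutator {σ : Signature} (A : Algebra σ) {k₀ : ℕ}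
    (f : (Fin (k₀ + 1) → A.carrier) → A.carrier) (hf : IsPolynomial A f)
    (av : Fin (k₀ + 1) → A.carrier) (a : A.carrier) (habs : Absorbs A f av a) :
    (∀ (n : ℕ) (nn : Fin (k₀ + 1) → ℕ), (∑ i, (nn i + 1)) = n →
      ∀ α : (i : Fin (k₀ + 1)) → Fin (nn i + 1) → Con A,
        ∀ b : Fin (k₀ + 1) → A.carrier,
          (∀ i, (commList (α i)).r (av i) (b i)) →
          (commList (fun i => commList (α i))).r a (f b)) ∧
    (∀ n : ℕ, 2 ≤ n → Supernilpotent A n →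
      ∀ m : ℕ, n ≤ m → ∀ g : (Fin m → A.carrier) → A.carrier,
        IsPolynomial A g → Absorbs A g (fun _ => a) a → g = fun _ => a) := by
  refine ⟨fun n nn _ α b hb => ?_, fun n hn hA m hm g hg hga => ?_⟩
  · exact absorb_grouped _ f hf av b a habs id Function.surjective_id hb
  · funext b
    obtain ⟨n, rfl⟩ : ∃ n', n = n' + 1 := ⟨n - 1, by omega⟩
    have h := absorb_grouped (fun _ : Fin (n + 1) => (Con.top : Con A)) g hg (fun _ => a) b a hga
      (fun i => ⟨min i.1 n, by omega⟩)
      (fun j => ⟨⟨j.1, by omega⟩, Fin.ext (by simp; omega)⟩)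
      (fun _ => trivial)
    have h' : (nfold (Con.top : Con A) (n + 1)).r a (g b) := h
    rw [show nfold (Con.top : Con A) (n + 1) = Con.bot from hA] at h'
    exact Eq.symm h'

end UA
end

section
/- Let L = ⟨A,·,\,/,0,F⟩ be an n-type expanded loop. If f ∈ Ab^k₀ L with 1 ≤ k ≤ n−1, then for any left-associated product ∏_{j=1}^m y_j and any coordinate i, the polynomial f(x₁,…,x_{i−1},∏_{j=1}^m y_j,x_{i+1},…,x_k) can be written as a product of 0-absorbing polynomials in the variables x₁,…,x_k,y₁,…,y_m whose arities p all satisfy k ≤ p ≤ n−1. -/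
set_option autoImplicit false

namespace UA

variable {σ : Signature}

theorem IsPolynomial.comp' {A : Algebra σ} {k : ℕ} {f : (Fin k → A.carrier) → A.carrier}
    (hf : IsPolynomial A f) : ∀ {N : ℕ} (g : Fin k → (Fin N → A.carrier) → A.carrier),
      (∀ j, IsPolynomial A (g j)) → IsPolynomial A (fun x => f (fun j => g j x)) := by
  induction hf with
  | proj i => intro N g hg; exact hg i
  | const a => intro N g hg; exact IsPolynomial.const a
  | app o h hh ih =>
    intro N g hg
    exact IsPolynomial.app o (fun j x => h j (fun i => g i x)) (fun j => ih j g hg)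

theorem isPoly_mul {ι : Type} {ar : ι → ℕ} {α : Type} (L : ExpLoop ι ar α) {N : ℕ}
    {f g : (Fin N → α) → α} (hf : IsPolynomial L.toAlgebra f) (hg : IsPolynomial L.toAlgebra g) :
    IsPolynomial L.toAlgebra (fun x : Fin N → α => L.mul (f x) (g x)) := by
  have := IsPolynomial.app (A := L.toAlgebra) (n := N) LoopOp.mul
    (fun j : Fin 2 => if j = 0 then f else g) (fun j => by
      by_cases h : j = (0 : Fin 2)
      · simpa [h] using hf
      · simpa [h] using hg)
  exact this

theorem isPoly_ldiv {ι : Type} {ar : ι → ℕ} {α : Type} (L : ExpLoop ι ar α) {N : ℕ}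
    {f g : (Fin N → α) → α} (hf : IsPolynomial L.toAlgebra f) (hg : IsPolynomial L.toAlgebra g) :
    IsPolynomial L.toAlgebra (fun x : Fin N → α => L.ldiv (f x) (g x)) := by
  have := IsPolynomial.app (A := L.toAlgebra) (n := N) LoopOp.ldiv
    (fun j : Fin 2 => if j = 0 then f else g) (fun j => by
      by_cases h : j = (0 : Fin 2)
      · simpa [h] using hf
      · simpa [h] using hg)
  exact this

theorem isPoly_update {ι : Type} {ar : ι → ℕ} {α : Type} (L : ExpLoop ι ar α) {N k : ℕ}
    {f : (Fin k → α) → α} (hf : IsPolynomial L.toAlgebra f) (i : Fin k)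
    (s : Fin k → Fin N) {g : (Fin N → α) → α} (hg : IsPolynomial L.toAlgebra g) :
    IsPolynomial L.toAlgebra
      (fun x : Fin N → α => f (Function.update (fun j => x (s j)) i (g x))) := by
  have h := IsPolynomial.comp' hf
    (fun j (x : Fin N → α) => Function.update (fun j => x (s j)) i (g x) j) (fun j => by
      by_cases h : j = i
      · subst h; simpa using hg
      · have e : (fun x : Fin N → α => Function.update (fun j => x (s j)) i (g x) j) =
            fun x => x (s j) := by
          funext x
          rw [Function.update_of_ne h]
        rw [e]
        exact IsPolynomial.proj (A := L.toAlgebra) (s j))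
  exact h

theorem ProdOfAbs.mono {ι : Type} {ar : ι → ℕ} {α : Type} {L : ExpLoop ι ar α}
    {lo lo' hi : ℕ} (hl : lo' ≤ lo) {I J : Type} (s : I → J) {F : (I → α) → α}
    (hF : ProdOfAbs L lo hi F) : ProdOfAbs L lo' hi (fun v : J → α => F (fun i => v (s i))) := by
  induction hF with
  | base h sel h1 h2 h3 h4 =>
    exact ProdOfAbs.base h (fun j => s (sel j)) (hl.trans h1) h2 h3 h4
  | mul _ _ ih1 ih2 => exact ProdOfAbs.mul ih1 ih2

theorem expansion_aux {ι : Type} {ar : ι → ℕ} {α : Type}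
    (L : ExpLoop ι ar α) (n : ℕ) (hL : L.IsNType n) (d : ℕ) :
    ∀ (k : ℕ) (_ : k + d = n - 1)
    (f : (Fin k → α) → α) (_ : IsPolynomial L.toAlgebra f)
    (_ : Absorbs L.toAlgebra f (fun _ => L.zero) L.zero)
    (i : Fin k) (m : ℕ),
    ∃ F : ((Fin k ⊕ Fin (m + 1)) → α) → α,
      ProdOfAbs L k (n - 1) F ∧
      ∀ (x : Fin k → α) (y : Fin (m + 1) → α),
        f (Function.update x i (lassoc L.mul y)) = F (Sum.elim x y) := by
  induction d with
  | zero =>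
    intro k hk f hfp hfa i m
    obtain rfl : k = n - 1 := by omega
    have single : ∀ (m : ℕ) (t : Fin (m + 1)), ProdOfAbs L (n - 1) (n - 1)
        (fun v : (Fin (n - 1) ⊕ Fin (m + 1)) → α =>
          f (fun j => v (Function.update Sum.inl i (Sum.inr t) j))) :=
      fun m t => ProdOfAbs.base f _ le_rfl le_rfl hfp hfa
    have single_eq : ∀ (m : ℕ) (t : Fin (m + 1)) (x : Fin (n - 1) → α) (y : Fin (m + 1) → α),
        f (Function.update x i (y t)) =
          f (fun j => (Sum.elim x y) (Function.update Sum.inl i (Sum.inr t) j)) := by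
      intro m t x y
      congr 1
      funext j
      by_cases h : j = i
      · subst h; simp
      · simp [Function.update_of_ne h]
    induction m with
    | zero => exact ⟨_, single 0 0, fun x y => single_eq 0 0 x y⟩
    | succ m ih =>
      obtain ⟨F, hF, hFe⟩ := ih
      refine ⟨_, ProdOfAbs.mul (hF.mono le_rfl (Sum.map id Fin.castSucc))
        (single (m + 1) (Fin.last (m + 1))), fun x y => ?_⟩
      show f (Function.update x i (L.mul (lassoc L.mul (Fin.init y)) (y (Fin.last (m + 1))))) = _
      rw [hL.2.1 f hfp hfa, hFe, single_eq (m + 1)]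
      congr 2
      funext j
      rcases j with j | j <;> rfl
  | succ d ihd =>
    intro k hk f hfp hfa i m
    have single : ∀ (m : ℕ) (t : Fin (m + 1)), ProdOfAbs L k (n - 1)
        (fun v : (Fin k ⊕ Fin (m + 1)) → α =>
          f (fun j => v (Function.update Sum.inl i (Sum.inr t) j))) :=
      fun m t => ProdOfAbs.base f _ le_rfl (by omega) hfp hfa
    have single_eq : ∀ (m : ℕ) (t : Fin (m + 1)) (x : Fin k → α) (y : Fin (m + 1) → α),
        f (Function.update x i (y t)) =
          f (fun j => (Sum.elim x y) (Function.update Sum.inl i (Sum.inr t) j)) := by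
      intro m t x y
      congr 1
      funext j
      by_cases h : j = i
      · subst h; simp
      · simp [Function.update_of_ne h]
    let g : (Fin (k + 1) → α) → α := fun v =>
      L.ldiv (L.mul (f (Function.update (fun j => v (Fin.castSucc j)) i (v i.castSucc)))
          (f (Function.update (fun j => v (Fin.castSucc j)) i (v (Fin.last k)))))
        (f (Function.update (fun j => v (Fin.castSucc j)) i
          (L.mul (v i.castSucc) (v (Fin.last k)))))
    have hgp : IsPolynomial L.toAlgebra g :=
      isPoly_ldiv L (isPoly_mul L
        (isPoly_update L hfp i _ (IsPolynomial.proj (A := L.toAlgebra) _))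
        (isPoly_update L hfp i _ (IsPolynomial.proj (A := L.toAlgebra) _)))
        (isPoly_update L hfp i _ (isPoly_mul L (IsPolynomial.proj (A := L.toAlgebra) _)
          (IsPolynomial.proj (A := L.toAlgebra) _)))
    have hself : ∀ a, L.ldiv a a = L.zero := fun a => by
      have := L.ldiv_mul a L.zero
      rwa [L.mul_zero] at this
    have hz : ∀ x : Fin k → α, f (Function.update x i L.zero) = L.zero :=
      fun x => hfa _ ⟨i, Function.update_self i L.zero x⟩
    have hga : Absorbs L.toAlgebra g (fun _ => L.zero) L.zero := by
      suffices H : ∀ b : Fin (k + 1) → α, (∃ j, b j = L.zero) → g b = L.zero from H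
      rintro b ⟨j, hj⟩
      simp only [g]
      induction j using Fin.lastCases with
      | last => rw [hj, hz, L.mul_zero, L.mul_zero, hself]
      | cast j =>
        by_cases h : j = i
        · subst h
          rw [hj, hz, L.zero_mul, L.zero_mul, hself]
        · have key : ∀ u, f (Function.update (fun j => b (Fin.castSucc j)) i u) = L.zero :=
            by
            intro u
            have e : Function.update (fun j => b (Fin.castSucc j)) i u j = L.zero := by
              rw [Function.update_of_ne h]; exact hj
            exact hfa _ ⟨j, e⟩
          rw [key, key, key, L.zero_mul, hself]
    induction m with
    | zero => exact ⟨_, single 0 0, fun x y => single_eq 0 0 x y⟩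
    | succ m ih =>
      obtain ⟨F, hF, hFe⟩ := ih
      obtain ⟨G, hG, hGe⟩ := ihd (k + 1) (by omega) g hgp hga i.castSucc m
      refine ⟨_, ProdOfAbs.mul (ProdOfAbs.mul (hF.mono le_rfl (Sum.map id Fin.castSucc))
        (single (m + 1) (Fin.last (m + 1))))
        (hG.mono (Nat.le_succ k) (Sum.elim
          (Fin.lastCases (motive := fun _ => Fin k ⊕ Fin (m + 1 + 1))
            (Sum.inr (Fin.last (m + 1))) Sum.inl)
          (fun j => Sum.inr j.castSucc))), fun x y => ?_⟩
      show f (Function.update x i (L.mul (lassoc L.mul (Fin.init y)) (y (Fin.last (m + 1))))) = _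
      have e1 : F (fun j => (Sum.elim x y) (Sum.map id Fin.castSucc j)) =
          f (Function.update x i (lassoc L.mul (Fin.init y))) := by
        rw [hFe]
        congr 1
        funext j
        rcases j with j | j <;> rfl
      have e2 : G (fun j => (Sum.elim x y) (Sum.elim
          (Fin.lastCases (motive := fun _ => Fin k ⊕ Fin (m + 1 + 1))
            (Sum.inr (Fin.last (m + 1))) Sum.inl)
          (fun j => Sum.inr j.castSucc) j)) =
          g (Function.update (Fin.snoc (α := fun _ => α) x (y (Fin.last (m + 1)))) i.castSucc
            (lassoc L.mul (Fin.init y))) := by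
        rw [hGe]
        congr 1
        funext j
        rcases j with j | j
        · induction j using Fin.lastCases with
          | last => simp
          | cast j => simp
        · rfl
      rw [e1, e2, ← single_eq (m + 1)]
      have e3 : ∀ u w : α, (fun j : Fin k => (Function.update (Fin.snoc (α := fun _ => α) x w)
          i.castSucc u : Fin (k + 1) → α) (Fin.castSucc j)) = Function.update x i u := by
        intro u w
        funext j
        by_cases h : j = i
        · subst h; simp
        · have h' : j.castSucc ≠ i.castSucc := fun e => h (Fin.castSucc_injective _ e)
          simp [Function.update_of_ne h, Function.update_of_ne h']
      have e4 : i.castSucc ≠ Fin.last k := (Fin.castSucc_lt_last i).ne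
      simp only [g, e3, Function.update_idem, Function.update_self,
        Function.update_of_ne e4.symm, Fin.snoc_last]
      rw [L.mul_ldiv]

/-- Lemma 3.5 of "On Supernilpotent Algebras": in an `n`-type expanded loop,
substituting a left-associated product into one coordinate of a `k`-ary
`0`-absorbing polynomial yields a product of `0`-absorbing polynomials in the
`x`'s and `y`'s of arities `p` with `k ≤ p ≤ n - 1`. -/
theorem ntype_absorbing_product_expansion {ι : Type} {ar : ι → ℕ} {α : Type}
    (L : ExpLoop ι ar α) (n : ℕ) (hL : L.IsNType n)
    (k : ℕ) (hk1 : 1 ≤ k) (hkn : k ≤ n - 1)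
    (f : (Fin k → α) → α) (hfp : IsPolynomial L.toAlgebra f)
    (hfa : Absorbs L.toAlgebra f (fun _ => L.zero) L.zero)
    (i : Fin k) (m : ℕ) :
    ∃ F : ((Fin k ⊕ Fin (m + 1)) → α) → α,
      ProdOfAbs L k (n - 1) F ∧
      ∀ (x : Fin k → α) (y : Fin (m + 1) → α),
        f (Function.update x i (lassoc L.mul y)) = F (Sum.elim x y) := by
  exact expansion_aux L n hL (n - 1 - k) k (by omega) f hfp hfa i m

end UA
end
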